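/- arXiv:math/0503447 — 3 statements merged into one kernel-verified Lean document; each statement's English description precedes it below -/
import Mathlib

section
/- Let E be a finite-dimensional real inner product space, let Γ and Λ be full ℤ-lattices in E, and let p be a prime. Then n(Γ,[Λ]) · |Aut(Λ)| = n(Λ,[Γ]) · |Aut(Γ)|, where n(Γ,[Λ]) is the number of p-neighbours of Γ that are isometric to Λ and Aut(Λ) is the automorphism group of Λ. (This is the self-adjointness of the Kneser neighbouring operator K_p.) -/
/-- The automorphism group of a lattice `Λ ⊆ E`: linear isometries of `E`
preserving `Λ`, realized as a set of linear isometric equivalences. -/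
def latticeAut {E : Type*} [NormedAddCommGroup E] [InnerProductSpace ℝ E]
    (Λ : Submodule ℤ E) : Set (E ≃ₗᵢ[ℝ] E) :=
  {g | ∀ x : E, g x ∈ Λ ↔ x ∈ Λ}

/-- The index of a submodule `X` of `E` in `Γ`, i.e. the index of `X ∩ Γ` in `Γ`. -/
noncomputable def latticeRelIndex {E : Type*} [AddCommGroup E] [Module ℤ E]
    (Γ X : Submodule ℤ E) : ℕ :=
  (X.toAddSubgroup.addSubgroupOf Γ.toAddSubgroup).index

/-- `Γ'` is a `p`-neighbour of `Γ` if `Γ ∩ Γ'` has index `p` in both `Γ` and `Γ'`. -/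
def IsPNeighbour {E : Type*} [AddCommGroup E] [Module ℤ E]
    (p : ℕ) (Γ Γ' : Submodule ℤ E) : Prop :=
  latticeRelIndex Γ (Γ ⊓ Γ') = p ∧ latticeRelIndex Γ' (Γ ⊓ Γ') = p

/-- `n(Γ,[Λ])`: the number of `p`-neighbours of `Γ` that are isometric to `Λ`. -/
noncomputable def neighbourCount {E : Type*} [NormedAddCommGroup E]
    [InnerProductSpace ℝ E] (p : ℕ) (Γ Λ : Submodule ℤ E) : ℕ :=
  Nat.card {Γ' : Submodule ℤ E //
    IsPNeighbour p Γ Γ' ∧ ∃ g : E ≃ₗᵢ[ℝ] E, ∀ x : E, g x ∈ Γ' ↔ x ∈ Λ}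

/-- The image of a lattice under an isometry. -/
def latImg {E : Type*} [NormedAddCommGroup E] [InnerProductSpace ℝ E]
    (g : E ≃ₗᵢ[ℝ] E) (Λ : Submodule ℤ E) : Submodule ℤ E :=
  Λ.comap (g.symm.toLinearEquiv.toAddEquiv.toAddMonoidHom.toIntLinearMap)

theorem mem_latImg {E : Type*} [NormedAddCommGroup E] [InnerProductSpace ℝ E]
    (g : E ≃ₗᵢ[ℝ] E) (Λ : Submodule ℤ E) (x : E) : x ∈ latImg g Λ ↔ g.symm x ∈ Λ := Iff.rfl

theorem latticeRelIndex_latImg {E : Type*} [NormedAddCommGroup E] [InnerProductSpace ℝ E]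
    (g : E ≃ₗᵢ[ℝ] E) (Γ X : Submodule ℤ E) :
    latticeRelIndex (latImg g Γ) (latImg g X) = latticeRelIndex Γ X := by
  change AddSubgroup.relIndex
    (X.toAddSubgroup.comap g.symm.toLinearEquiv.toAddEquiv.toAddMonoidHom)
    (Γ.toAddSubgroup.comap g.symm.toLinearEquiv.toAddEquiv.toAddMonoidHom) =
    AddSubgroup.relIndex X.toAddSubgroup Γ.toAddSubgroup
  rw [AddSubgroup.relIndex_comap, AddSubgroup.map_comap_eq_self_of_surjective]
  exact g.symm.surjective

theorem IsPNeighbour.latImg {E : Type*} [NormedAddCommGroup E] [InnerProductSpace ℝ E]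
    {p : ℕ} {Γ Γ' : Submodule ℤ E} (h : IsPNeighbour p Γ Γ') (g : E ≃ₗᵢ[ℝ] E) :
    IsPNeighbour p (latImg g Γ) (latImg g Γ') := by
  have e : _root_.latImg g Γ ⊓ _root_.latImg g Γ' = _root_.latImg g (Γ ⊓ Γ') := rfl
  unfold IsPNeighbour
  rw [e, latticeRelIndex_latImg, latticeRelIndex_latImg]
  exact h

theorem IsPNeighbour.swap {E : Type*} [NormedAddCommGroup E] [InnerProductSpace ℝ E]
    {p : ℕ} {Γ Γ' : Submodule ℤ E} (h : IsPNeighbour p Γ Γ') : IsPNeighbour p Γ' Γ := by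
  unfold IsPNeighbour at *
  rw [inf_comm]
  exact h.symm

theorem neighbour_inv {E : Type*} [NormedAddCommGroup E] [InnerProductSpace ℝ E]
    {p : ℕ} {Γ Λ : Submodule ℤ E} {g : E ≃ₗᵢ[ℝ] E} (h : IsPNeighbour p Γ (latImg g Λ)) :
    IsPNeighbour p Λ (latImg g.symm Γ) := by
  have h2 := (h.latImg g.symm).swap
  have e : latImg g.symm (latImg g Λ) = Λ := by
    ext x
    simp [mem_latImg]
  rwa [e] at h2

theorem neighbourCount_mul {E : Type*} [NormedAddCommGroup E] [InnerProductSpace ℝ E]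
    (p : ℕ) (Γ Λ : Submodule ℤ E) :
    neighbourCount p Γ Λ * Nat.card (latticeAut Λ) =
      Nat.card {g : E ≃ₗᵢ[ℝ] E // IsPNeighbour p Γ (latImg g Λ)} := by
  unfold neighbourCount
  rw [← Nat.card_prod]
  have key : ∀ (Γ' : Submodule ℤ E) (g : E ≃ₗᵢ[ℝ] E), (∀ x, g x ∈ Γ' ↔ x ∈ Λ) →
      latImg g Λ = Γ' := by
    intro Γ' g h
    ext x
    rw [mem_latImg, ← h, g.apply_symm_apply]
  choose c hc using fun N : {Γ' : Submodule ℤ E //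
    IsPNeighbour p Γ Γ' ∧ ∃ g : E ≃ₗᵢ[ℝ] E, ∀ x : E, g x ∈ Γ' ↔ x ∈ Λ} => N.2.2
  have hm : ∀ N (a : latticeAut Λ), latImg (a.1.trans (c N)) Λ = N.1 := by
    intro N a
    refine key _ _ fun x => ?_
    rw [LinearIsometryEquiv.trans_apply, hc]
    exact a.2 x
  refine Nat.card_congr (Equiv.ofBijective
    (fun q => ⟨q.2.1.trans (c q.1), by rw [hm]; exact q.1.2.1⟩) ⟨?_, ?_⟩)
  · rintro ⟨N, a⟩ ⟨M, b⟩ h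
    have h1 : a.1.trans (c N) = b.1.trans (c M) := congrArg Subtype.val h
    have h2 : N = M := Subtype.ext (by rw [← hm N a, ← hm M b, h1])
    subst h2
    congr 1
    ext x
    have h3 := DFunLike.congr_fun h1 x
    exact (c N).injective h3
  · rintro ⟨g, hg⟩
    let N : {Γ' : Submodule ℤ E //
      IsPNeighbour p Γ Γ' ∧ ∃ g : E ≃ₗᵢ[ℝ] E, ∀ x : E, g x ∈ Γ' ↔ x ∈ Λ} :=
      ⟨latImg g Λ, hg, g, fun x => by rw [mem_latImg, g.symm_apply_apply]⟩
    refine ⟨⟨N, g.trans (c N).symm, fun x => ?_⟩, ?_⟩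
    · rw [← hc N, LinearIsometryEquiv.trans_apply, LinearIsometryEquiv.apply_symm_apply]
      change g x ∈ latImg g Λ ↔ _
      rw [mem_latImg, g.symm_apply_apply]
    · apply Subtype.ext
      ext x
      simp

/-- Self-adjointness of the Kneser neighbouring operator `K_p`: for full
`ℤ`-lattices `Γ, Λ` in a finite-dimensional real inner product space and a prime
`p`, one has `n(Γ,[Λ]) · |Aut(Λ)| = n(Λ,[Γ]) · |Aut(Γ)|`. -/
theorem neighbourCount_mul_card_aut_symm
    {E : Type*} [NormedAddCommGroup E] [InnerProductSpace ℝ E] [FiniteDimensional ℝ E]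
    (Γ Λ : Submodule ℤ E)
    [DiscreteTopology Γ] [IsZLattice ℝ Γ] [DiscreteTopology Λ] [IsZLattice ℝ Λ]
    (p : ℕ) (hp : p.Prime) :
    neighbourCount p Γ Λ * Nat.card (latticeAut Λ) =
      neighbourCount p Λ Γ * Nat.card (latticeAut Γ) := by
  rw [neighbourCount_mul, neighbourCount_mul]
  exact Nat.card_congr
    { toFun := fun g => ⟨g.1.symm, neighbour_inv g.2⟩
      invFun := fun g => ⟨g.1.symm, neighbour_inv g.2⟩
      left_inv := fun g => rfl
      right_inv := fun g => rfl }
end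

section
/- Let V be a finite-dimensional complex inner product space, let S be a family of pairwise commuting self-adjoint endomorphisms of V, and let U be a subspace of V invariant under every operator in S. Let d ∈ V be a nonzero simultaneous eigenvector of all operators in S (say T·d = c_T·d for each T ∈ S), and assume d spans its full simultaneous eigenspace, i.e., every x ∈ V with T·x = c_T·x for all T ∈ S is a scalar multiple of d. Then d ∈ U or d ∈ U^⊥. -/
/-- Let `V` be a finite-dimensional complex inner product space, `S` a family of
pairwise commuting self-adjoint endomorphisms of `V`, and `U` a subspace invariant
under every operator in `S`. If `d ≠ 0` is a simultaneous eigenvector of all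
operators in `S` (with eigenvalue system `c`) spanning its full simultaneous
eigenspace, then `d ∈ U` or `d ∈ Uᗮ`. -/
theorem simultaneous_eigenvector_mem_or_mem_orthogonal
    {V : Type*} [NormedAddCommGroup V] [InnerProductSpace ℂ V] [FiniteDimensional ℂ V]
    (S : Set (V →ₗ[ℂ] V))
    (hcomm : ∀ T ∈ S, ∀ T' ∈ S, T ∘ₗ T' = T' ∘ₗ T)
    (hsa : ∀ T ∈ S, LinearMap.IsSymmetric T)
    (U : Submodule ℂ V) (hU : ∀ T ∈ S, ∀ x ∈ U, T x ∈ U)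
    (d : V) (hd : d ≠ 0) (c : (V →ₗ[ℂ] V) → ℂ)
    (heig : ∀ T ∈ S, T d = c T • d)
    (hfull : ∀ x : V, (∀ T ∈ S, T x = c T • x) → ∃ a : ℂ, x = a • d) :
    d ∈ U ∨ d ∈ Uᗮ := by
  obtain ⟨u, hu, w, hw, hdw⟩ := Submodule.exists_add_mem_mem_orthogonal (K := U) d
  have key : ∀ T ∈ S, T u = c T • u := by
    intro T hT
    have h1 : T u - c T • u ∈ U := U.sub_mem (hU T hT u hu) (U.smul_mem _ hu)
    have hTw : T w ∈ Uᗮ := by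
      rw [Submodule.mem_orthogonal]
      intro y hy
      rw [← hsa T hT y w]
      exact (Submodule.mem_orthogonal U w).1 hw _ (hU T hT y hy)
    have h2 : c T • w - T w ∈ Uᗮ := Uᗮ.sub_mem (Uᗮ.smul_mem _ hw) hTw
    have h3 : T u - c T • u = c T • w - T w := by
      have h := heig T hT
      rw [hdw, map_add, smul_add] at h
      rw [sub_eq_sub_iff_add_eq_add, h, add_comm]
    rw [← h3] at h2
    have h4 : T u - c T • u = 0 :=
      inner_self_eq_zero.1 ((Submodule.mem_orthogonal U _).1 h2 _ h1)
    exact sub_eq_zero.1 h4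
  obtain ⟨a, ha⟩ := hfull u key
  by_cases h0 : a = 0
  · right
    rw [h0, zero_smul] at ha
    rw [hdw, ha, zero_add]
    exact hw
  · left
    rw [ha] at hu
    exact (U.smul_mem_iff h0).1 hu
end

section
/- Let V be a finite-dimensional complex inner product space, let S be a family of pairwise commuting self-adjoint endomorphisms of V, and let V = U₋₁ ⊇ U₀ ⊇ U₁ ⊇ … ⊇ U_N = {0} be a descending chain of subspaces each of which is invariant under every operator in S. Let d ∈ V be a nonzero simultaneous eigenvector of all operators in S that spans its full simultaneous eigenspace (every simultaneous eigenvector with the same system of eigenvalues is a scalar multiple of d). Let v be the unique index with d ∈ U_v and d ∉ U_{v+1}. Then d ∈ (U_{v+1})^⊥ and d ∉ (U_v)^⊥; that is, setting W_n = (U_n)^⊥ and letting w be the minimal index with d ∈ W_w, one has w = v + 1. -/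
/-- Let `V` be a finite-dimensional complex inner product space, `S` a family of
pairwise commuting self-adjoint endomorphisms of `V`, and
`V = U 0 ⊇ U 1 ⊇ … ⊇ U (N+1) = 0` a descending chain of subspaces, each invariant
under every operator in `S` (here `U (n+1)` plays the role of the paper's `U_n`,
so the chain is `U₋₁ ⊇ U₀ ⊇ … ⊇ U_N`). Let `d ≠ 0` be a simultaneous eigenvector
of all operators in `S` spanning its full simultaneous eigenspace, and let `v` be
the index with `d ∈ U v`, `d ∉ U (v+1)`. Then `d ∈ (U (v+1))ᗮ` and `d ∉ (U v)ᗮ`;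
i.e. the minimal index `w` with `d ∈ (U w)ᗮ` is `v + 1`. -/
theorem simultaneous_eigenvector_filtration_shift
    {V : Type*} [NormedAddCommGroup V] [InnerProductSpace ℂ V] [FiniteDimensional ℂ V]
    (S : Set (V →ₗ[ℂ] V))
    (hcomm : ∀ T ∈ S, ∀ T' ∈ S, T ∘ₗ T' = T' ∘ₗ T)
    (hsa : ∀ T ∈ S, LinearMap.IsSymmetric T)
    (N : ℕ) (U : ℕ → Submodule ℂ V)
    (htop : U 0 = ⊤) (hbot : U (N + 1) = ⊥)
    (hchain : ∀ n, U (n + 1) ≤ U n)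
    (hinv : ∀ n, ∀ T ∈ S, ∀ x ∈ U n, T x ∈ U n)
    (d : V) (hd : d ≠ 0) (c : (V →ₗ[ℂ] V) → ℂ)
    (heig : ∀ T ∈ S, T d = c T • d)
    (hfull : ∀ x : V, (∀ T ∈ S, T x = c T • x) → ∃ a : ℂ, x = a • d)
    (v : ℕ) (hv : d ∈ U v) (hv' : d ∉ U (v + 1)) :
    d ∈ (U (v + 1))ᗮ ∧ d ∉ (U v)ᗮ := by
  constructor
  · obtain ⟨p, hp, q, hq, hpq⟩ := (U (v + 1)).exists_add_mem_mem_orthogonal d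
    have hpe : ∀ T ∈ S, T p = c T • p := by
      intro T hT
      have h1 : T p - c T • p ∈ U (v + 1) :=
        Submodule.sub_mem _ (hinv _ T hT p hp) (Submodule.smul_mem _ _ hp)
      have hTq : T q ∈ (U (v + 1))ᗮ := by
        rw [Submodule.mem_orthogonal] at hq ⊢
        intro u hu
        rw [← hsa T hT u q]
        exact hq _ (hinv _ T hT u hu)
      have h2 : T p - c T • p = c T • q - T q := by
        have h := heig T hT
        rw [hpq, map_add, smul_add] at h
        rw [sub_eq_sub_iff_add_eq_add, h, add_comm]
      have h3 : T p - c T • p ∈ (U (v + 1))ᗮ := by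
        rw [h2]
        exact Submodule.sub_mem _ (Submodule.smul_mem _ _ hq) hTq
      have h4 : inner ℂ (T p - c T • p) (T p - c T • p) = 0 :=
        (Submodule.mem_orthogonal _ _).1 h3 _ h1
      exact sub_eq_zero.1 (inner_self_eq_zero.1 h4)
    obtain ⟨a, ha⟩ := hfull p hpe
    have ha0 : a = 0 := by
      by_contra hne
      apply hv'
      have : d = a⁻¹ • p := by rw [ha, inv_smul_smul₀ hne]
      rw [this]
      exact Submodule.smul_mem _ _ hp
    have hdq : d = q := by
      rw [ha0, zero_smul] at ha
      rw [ha, zero_add] at hpq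
      exact hpq
    rw [hdq]
    exact hq
  · intro h
    exact hd (inner_self_eq_zero.1 ((Submodule.mem_orthogonal _ _).1 h d hv))
end
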